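/- Let m, n be coprime integers with m ≥ 2 and n ≥ 2. Let S be the set of pairs of integers (k, k') with 1 ≤ k < k' ≤ mn − 1 such that none of k, k', k' − k is divisible by m, and at least one but not all three of k, k', k' − k are divisible by n. Then 2·|S| = 3(n − 1)(m − 1)(m − 2). -/

import Mathlib

/-!
Reducing `(k, k')` modulo `m` and modulo `n` turns both divisibility conditions into conditions on
coincidences among `0, k, k'`: modulo `m` these are pairwise distinct, modulo `n` exactly two of
them coincide. Both conditions are symmetric in `k` and `k'` and exclude `k = k'`, so `2|S|` counts
all ordered pairs in `[0, mn)²` satisfying them. By the Chinese remainder theorem this count is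
`(m - 1)(m - 2)`, the number of pairs allowed modulo `m`, times `3(n - 1)`, the number of pairs
allowed modulo `n`.
-/

open Finset

section Coincidences

variable (A : Type*) [Zero A] [Fintype A] [DecidableEq A]

/-- The pairs `(x, y)` for which `0, x, y` are pairwise distinct. In an additive group this says
that none of `x`, `y`, `y - x` vanishes. -/
def distinctNonzeroPairs : Finset (A × A) :=
  ({0}ᶜ : Finset A).offDiag

/-- The pairs `(x, y)` for which exactly two of `0, x, y` coincide. In an additive group this says
that at least one, but not all, of `x`, `y`, `y - x` vanish. -/
def singleCoincidencePairs : Finset (A × A) :=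
  {p | (p.1 = 0 ∨ p.2 = 0 ∨ p.1 = p.2) ∧ ¬ (p.1 = 0 ∧ p.2 = 0)}

variable {A}

theorem mem_distinctNonzeroPairs {p : A × A} :
    p ∈ distinctNonzeroPairs A ↔ p.1 ≠ 0 ∧ p.2 ≠ 0 ∧ p.1 ≠ p.2 := by
  simp [distinctNonzeroPairs]

theorem mem_singleCoincidencePairs {p : A × A} :
    p ∈ singleCoincidencePairs A ↔
      (p.1 = 0 ∨ p.2 = 0 ∨ p.1 = p.2) ∧ ¬ (p.1 = 0 ∧ p.2 = 0) := by
  simp [singleCoincidencePairs]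

theorem swap_mem_distinctNonzeroPairs {p : A × A} :
    p.swap ∈ distinctNonzeroPairs A ↔ p ∈ distinctNonzeroPairs A := by
  simp only [mem_distinctNonzeroPairs, Prod.fst_swap, Prod.snd_swap]
  grind

theorem swap_mem_singleCoincidencePairs {p : A × A} :
    p.swap ∈ singleCoincidencePairs A ↔ p ∈ singleCoincidencePairs A := by
  simp only [mem_singleCoincidencePairs, Prod.fst_swap, Prod.snd_swap]
  grind

variable (A)

theorem card_distinctNonzeroPairs :
    #(distinctNonzeroPairs A) = (Fintype.card A - 1) * (Fintype.card A - 2) := by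
  rw [distinctNonzeroPairs, offDiag_card, card_compl, card_singleton, ← Nat.mul_sub_one,
    Nat.sub_sub]

theorem singleCoincidencePairs_eq_compl :
    singleCoincidencePairs A = (insert (0, 0) (distinctNonzeroPairs A))ᶜ := by
  ext ⟨x, y⟩
  simp only [mem_singleCoincidencePairs, mem_compl, mem_insert, mem_distinctNonzeroPairs,
    Prod.mk.injEq]
  tauto

theorem card_singleCoincidencePairs :
    #(singleCoincidencePairs A) = 3 * (Fintype.card A - 1) := by
  have zero_notMem : ((0, 0) : A × A) ∉ distinctNonzeroPairs A := by
    simp [mem_distinctNonzeroPairs]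
  rw [singleCoincidencePairs_eq_compl, card_compl, card_insert_of_notMem zero_notMem,
    card_distinctNonzeroPairs, Fintype.card_prod]
  obtain ⟨a, ha⟩ := Nat.exists_eq_succ_of_ne_zero (Fintype.card_ne_zero (α := A))
  rw [ha]
  rcases a with _ | a
  · rfl
  · simp only [Nat.succ_eq_add_one, Nat.add_sub_cancel, Nat.reduceSubDiff]
    rw [Nat.sub_eq_iff_eq_add (by nlinarith)]
    ring

end Coincidences

theorem two_mul_card_filter_fst_lt_snd {α : Type*} [LinearOrder α] (s : Finset (α × α))
    (swap_mem : ∀ p ∈ s, p.swap ∈ s) (fst_ne_snd : ∀ p ∈ s, p.1 ≠ p.2) :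
    2 * #{p ∈ s | p.1 < p.2} = #s := by
  have card_not_lt : #{p ∈ s | ¬ p.1 < p.2} = #{p ∈ s | p.1 < p.2} := by
    refine card_nbij' Prod.swap Prod.swap ?_ ?_ (fun _ _ => rfl) (fun _ _ => rfl)
    · intro p hp
      simp only [coe_filter, Set.mem_ofPred_eq, not_lt] at hp ⊢
      exact ⟨swap_mem p hp.1, hp.2.lt_of_ne (fst_ne_snd p hp.1).symm⟩
    · intro p hp
      simp only [coe_filter, Set.mem_ofPred_eq, not_lt] at hp ⊢
      exact ⟨swap_mem p hp.1, hp.2.le⟩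
  rw [← card_filter_add_card_filter_not (s := s) (fun p => p.1 < p.2), card_not_lt, two_mul]

section Residues

theorem bijOn_natCast_zmod_prod {m n : ℕ} [NeZero m] [NeZero n] (hco : m.Coprime n) :
    Set.BijOn (fun k : ℕ => ((k : ZMod m), (k : ZMod n))) (range (m * n)) Set.univ := by
  refine ⟨Set.mapsTo_univ _ _, fun k hk l hl hkl => ?_, fun ⟨x, y⟩ _ => ?_⟩
  · simp only [Prod.mk.injEq, ZMod.natCast_eq_natCast_iff] at hkl
    exact ((Nat.modEq_and_modEq_iff_modEq_mul hco).1 hkl).eq_of_lt_of_lt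
      (mem_range.1 hk) (mem_range.1 hl)
  · refine ⟨Nat.chineseRemainder hco x.val y.val,
      mem_coe.2 (mem_range.2 (Nat.chineseRemainder_lt_mul hco _ _ (NeZero.ne m) (NeZero.ne n))), ?_⟩
    obtain ⟨k, hkx, hky⟩ := Nat.chineseRemainder hco x.val y.val
    simp [(ZMod.natCast_eq_natCast_iff _ _ _).2 hkx, (ZMod.natCast_eq_natCast_iff _ _ _).2 hky]

theorem card_filter_natCast_mem_and_natCast_mem {m n : ℕ} [NeZero m] [NeZero n]
    (hco : m.Coprime n) (P : Finset (ZMod m × ZMod m)) (Q : Finset (ZMod n × ZMod n)) :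
    #{p ∈ range (m * n) ×ˢ range (m * n) | p.map (↑) (↑) ∈ P ∧ p.map (↑) (↑) ∈ Q} = #P * #Q := by
  obtain ⟨-, residues_injOn, residues_surjOn⟩ := bijOn_natCast_zmod_prod hco
  rw [← card_product]
  refine card_nbij (fun p => (p.map (↑) (↑), p.map (↑) (↑))) ?_ ?_ ?_
  · intro p hp
    exact mem_product.2 (mem_filter.1 hp).2
  · rintro ⟨k, k'⟩ hk ⟨l, l'⟩ hl h
    simp only [coe_filter, mem_product, Set.mem_ofPred_eq] at hk hl
    simp only [Prod.map_apply, Prod.mk.injEq] at h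
    exact Prod.ext (residues_injOn hk.1.1 hl.1.1 (Prod.ext h.1.1 h.2.1))
      (residues_injOn hk.1.2 hl.1.2 (Prod.ext h.1.2 h.2.2))
  · rintro ⟨⟨x, x'⟩, y, y'⟩ hxy
    obtain ⟨k, hk, hkxy⟩ := residues_surjOn (Set.mem_univ (x, y))
    obtain ⟨k', hk', hkxy'⟩ := residues_surjOn (Set.mem_univ (x', y'))
    obtain ⟨rfl, rfl⟩ := Prod.mk.inj hkxy
    obtain ⟨rfl, rfl⟩ := Prod.mk.inj hkxy'
    exact ⟨(k, k'), mem_filter.2 ⟨mem_product.2 ⟨hk, hk'⟩, mem_product.1 hxy⟩, rfl⟩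

variable (m n : ℕ) [NeZero m] [NeZero n]

/-- The ordered pairs `(k, k')` in `[0, mn)²` for which `0, k, k'` are pairwise distinct modulo `m`
while exactly two of them coincide modulo `n`: the set of the theorem without the condition
`k < k'`. -/
def residuePairs : Finset (ℕ × ℕ) :=
  {p ∈ range (m * n) ×ˢ range (m * n) |
    p.map (↑) (↑) ∈ distinctNonzeroPairs (ZMod m) ∧
    p.map (↑) (↑) ∈ singleCoincidencePairs (ZMod n)}

variable {m n}

theorem mem_residuePairs {p : ℕ × ℕ} :
    p ∈ residuePairs m n ↔ (p.1 < m * n ∧ p.2 < m * n) ∧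
      p.map (↑) (↑) ∈ distinctNonzeroPairs (ZMod m) ∧
      p.map (↑) (↑) ∈ singleCoincidencePairs (ZMod n) := by
  simp only [residuePairs, mem_filter, mem_product, mem_range]

theorem swap_mem_residuePairs {p : ℕ × ℕ} (hp : p ∈ residuePairs m n) :
    p.swap ∈ residuePairs m n := by
  rw [mem_residuePairs] at hp ⊢
  exact ⟨hp.1.symm, swap_mem_distinctNonzeroPairs.2 hp.2.1,
    swap_mem_singleCoincidencePairs.2 hp.2.2⟩

theorem fst_ne_snd_of_mem_residuePairs {p : ℕ × ℕ} (hp : p ∈ residuePairs m n) : p.1 ≠ p.2 :=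
  fun h => (mem_distinctNonzeroPairs.1 (mem_residuePairs.1 hp).2.1).2.2 (congrArg Nat.cast h)

theorem card_residuePairs (hco : m.Coprime n) :
    #(residuePairs m n) = (m - 1) * (m - 2) * (3 * (n - 1)) := by
  rw [residuePairs, card_filter_natCast_mem_and_natCast_mem hco, card_distinctNonzeroPairs,
    card_singleCoincidencePairs, ZMod.card, ZMod.card]

theorem natCast_mem_distinctNonzeroPairs_iff {k k' : ℕ} (hk : k ≤ k') :
    ((k, k') : ℕ × ℕ).map (↑) (↑) ∈ distinctNonzeroPairs (ZMod m) ↔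
      ¬ m ∣ k ∧ ¬ m ∣ k' ∧ ¬ m ∣ k' - k := by
  simp only [mem_distinctNonzeroPairs, Prod.map_fst, Prod.map_snd, ne_eq,
    ZMod.natCast_eq_zero_iff, ZMod.natCast_eq_natCast_iff, Nat.modEq_iff_dvd' hk]

theorem natCast_mem_singleCoincidencePairs_iff {k k' : ℕ} (hk : k ≤ k') :
    ((k, k') : ℕ × ℕ).map (↑) (↑) ∈ singleCoincidencePairs (ZMod n) ↔
      (n ∣ k ∨ n ∣ k' ∨ n ∣ k' - k) ∧ ¬ (n ∣ k ∧ n ∣ k' ∧ n ∣ k' - k) := by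
  have dvd_sub_of_dvd : n ∣ k ∧ n ∣ k' → n ∣ k' - k := fun h => Nat.dvd_sub h.2 h.1
  simp only [mem_singleCoincidencePairs, Prod.map_fst, Prod.map_snd,
    ZMod.natCast_eq_zero_iff, ZMod.natCast_eq_natCast_iff, Nat.modEq_iff_dvd' hk]
  tauto

theorem mem_residuePairs_iff_of_lt {k k' : ℕ} (hk : k < k') :
    (k, k') ∈ residuePairs m n ↔ (k ∈ Icc 1 (m * n - 1) ∧ k' ∈ Icc 1 (m * n - 1)) ∧
      ¬ m ∣ k ∧ ¬ m ∣ k' ∧ ¬ m ∣ k' - k ∧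
      (n ∣ k ∨ n ∣ k' ∨ n ∣ k' - k) ∧ ¬ (n ∣ k ∧ n ∣ k' ∧ n ∣ k' - k) := by
  have pos_of_not_dvd : ¬ m ∣ k → 0 < k := fun h => Nat.pos_of_ne_zero (by rintro rfl; simp at h)
  rw [mem_residuePairs, natCast_mem_distinctNonzeroPairs_iff hk.le,
    natCast_mem_singleCoincidencePairs_iff hk.le]
  simp only [mem_Icc]
  generalize m * n = N
  grind

end Residues

/-- For coprime `m, n ≥ 2`, let `S` be the set of pairs `1 ≤ k < k' ≤ mn - 1` such that
none of `k, k', k' - k` is divisible by `m`, and at least one but not all three of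
`k, k', k' - k` are divisible by `n`. Then `2|S| = 3(n-1)(m-1)(m-2)`. -/
theorem stmt_15 (m n : ℕ) (hm : 2 ≤ m) (hn : 2 ≤ n) (hco : Nat.Coprime m n) :
    2 * ((Finset.Icc 1 (m * n - 1) ×ˢ Finset.Icc 1 (m * n - 1)).filter fun p =>
        p.1 < p.2 ∧
        ¬ m ∣ p.1 ∧ ¬ m ∣ p.2 ∧ ¬ m ∣ (p.2 - p.1) ∧
        (n ∣ p.1 ∨ n ∣ p.2 ∨ n ∣ (p.2 - p.1)) ∧
        ¬ (n ∣ p.1 ∧ n ∣ p.2 ∧ n ∣ (p.2 - p.1))).card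
      = 3 * (n - 1) * (m - 1) * (m - 2) := by
  have : NeZero m := ⟨by lia⟩
  have : NeZero n := ⟨by lia⟩
  calc
    _ = 2 * #{p ∈ residuePairs m n | p.1 < p.2} := by
      congr 2
      ext ⟨k, k'⟩
      by_cases hk : k < k'
      · simp only [mem_filter, mem_product, mem_residuePairs_iff_of_lt hk, hk, true_and, and_true]
      · simp only [mem_filter, hk, false_and, and_false]
    _ = #(residuePairs m n) :=
      two_mul_card_filter_fst_lt_snd _ (fun _ => swap_mem_residuePairs)
        (fun _ => fst_ne_snd_of_mem_residuePairs)
    _ = (m - 1) * (m - 2) * (3 * (n - 1)) := card_residuePairs hco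
    _ = 3 * (n - 1) * (m - 1) * (m - 2) := by ring
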